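/- arXiv:2111.11963 — 2 statements merged into one kernel-verified Lean document; each statement's English description precedes it below -/
import Mathlib

section
/- For every reservation problem over a finite horizon T there exists a lottery solution — a finitely supported probability distribution over monotone sequences (Z^1,…,Z^T) of reservation tables — such that: (i) almost surely Z^t_{ij} ∈ {⌊α_j·Q_i^t⌋, ⌈α_j·Q_i^t⌉} for every period t, department i and category j (the lottery stays within department quota); and (ii) E[Z^t_{ij}] = α_j·Q_i^t for every t, i, j (the lottery is unbiased). -/
open Finset

/-- Period-`t` cumulative vacancy count of department `i`: `Q_i^t = ∑_{s ≤ t} q_i^s`. -/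
def cumQ {D : Type} {T : ℕ} (q : Fin T → D → ℕ) (t : Fin T) (i : D) : ℕ :=
  ∑ s ∈ Finset.univ.filter (fun s : Fin T => s ≤ t), q s i

/-- The signed incidence coefficient of the edge `e` at the vertex `v` in the directed graph with
edge sources `src` and edge targets `tgt`. -/
noncomputable def incidence {V E : Type} (src tgt : E → V) (e : E) (v : V) : ℝ :=
  open Classical in (Pi.single (tgt e) 1 : V → ℝ) v - (Pi.single (src e) 1 : V → ℝ) v

/-- The net inflow of `f` at the vertex `v`. -/
noncomputable def netInflow {V E : Type} [Fintype E] (src tgt : E → V) (f : E → ℝ) (v : V) : ℝ :=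
  ∑ e, incidence src tgt e v * f e

/-- The integers as a subring of the reals. -/
noncomputable abbrev intSubring : Subring ℝ := (Int.castRingHom ℝ).range

section Flow

variable {V E : Type} {src tgt : E → V}

lemma incidence_mem_intSubring (e : E) (v : V) : incidence src tgt e v ∈ intSubring := by
  classical
  simp only [incidence, Pi.single_apply]
  split_ifs <;> first
    | exact sub_mem (one_mem _) (one_mem _) | exact sub_mem (one_mem _) (zero_mem _)
    | exact sub_mem (zero_mem _) (one_mem _) | exact sub_mem (zero_mem _) (zero_mem _)

lemma incidence_eq_zero {e : E} {v : V} (h : ¬ (src e = v ∨ tgt e = v)) :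
    incidence src tgt e v = 0 := by
  push Not at h
  simp [incidence, h.1.symm, h.2.symm]

lemma mem_intSubring_of_incidence_mul {e : E} {v : V} (hne : src e ≠ tgt e)
    (hv : src e = v ∨ tgt e = v) {x : ℝ} (h : incidence src tgt e v * x ∈ intSubring) :
    x ∈ intSubring := by
  rcases hv with rfl | rfl
  · simpa [incidence, hne.symm] using neg_mem h
  · simpa [incidence, hne] using h

variable [Fintype E]

lemma netInflow_add (f g : E → ℝ) (v : V) :
    netInflow src tgt (f + g) v = netInflow src tgt f v + netInflow src tgt g v := by
  simp [netInflow, mul_add, sum_add_distrib]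

lemma netInflow_smul (c : ℝ) (f : E → ℝ) (v : V) :
    netInflow src tgt (c • f) v = c * netInflow src tgt f v := by
  simp only [netInflow, mul_sum, Pi.smul_apply, smul_eq_mul]
  exact sum_congr rfl fun _ _ => by ring

/-- A vertex with integral net inflow that meets a fractional edge meets at least two of them. -/
lemma two_le_card_fractional_edges_at (hne : ∀ e, src e ≠ tgt e) {f : E → ℝ} {v : V}
    (hf : netInflow src tgt f v ∈ intSubring) {e₀ : E} (he₀ : f e₀ ∉ intSubring)
    (hv : src e₀ = v ∨ tgt e₀ = v) :
    open Classical in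
    2 ≤ #{e | f e ∉ intSubring ∧ (src e = v ∨ tgt e = v)} := by
  classical
  by_contra! hcard
  have huniq : ∀ e, f e ∉ intSubring → (src e = v ∨ tgt e = v) → e = e₀ := fun e h h' =>
    card_le_one.1 (Nat.lt_succ_iff.1 hcard) e (by simp only [mem_filter]; exact ⟨mem_univ _, h, h'⟩)
      e₀ (by simp only [mem_filter]; exact ⟨mem_univ _, he₀, hv⟩)
  refine he₀ (mem_intSubring_of_incidence_mul (hne e₀) hv ?_)
  rw [netInflow, ← add_sum_erase _ _ (mem_univ e₀)] at hf
  refine (add_mem_cancel_right (sum_mem fun e he => ?_)).1 hf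
  by_cases h : f e ∈ intSubring
  · exact mul_mem (incidence_mem_intSubring e v) h
  · rw [incidence_eq_zero fun h' => (mem_erase.1 he).1 (huniq e h h'), zero_mul]
    exact zero_mem _

/-- The total net inflow over a set of vertices containing all endpoints that matter vanishes. -/
lemma sum_netInflow_eq_zero {d : E → ℝ} (W : Finset V)
    (hW : ∀ e, d e ≠ 0 → src e ∈ W ∧ tgt e ∈ W) : ∑ v ∈ W, netInflow src tgt d v = 0 := by
  classical
  simp only [netInflow]
  rw [sum_comm]
  refine sum_eq_zero fun e _ => ?_
  by_cases h : d e = 0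
  · simp [h]
  · rw [← sum_mul]
    simp [incidence, hW e h]

/-- A non-integral flow with integral net inflows admits a nonzero circulation supported on its
fractional edges. -/
lemma exists_circulation_on_fractional (hne : ∀ e, src e ≠ tgt e) {f : E → ℝ}
    (hf : ∀ v, netInflow src tgt f v ∈ intSubring) {e₀ : E} (he₀ : f e₀ ∉ intSubring) :
    ∃ d : E → ℝ, d ≠ 0 ∧ (∀ e, f e ∈ intSubring → d e = 0) ∧
      ∀ v, netInflow src tgt d v = 0 := by
  classical
  set F : Finset E := {e | f e ∉ intSubring} with hF
  have memF : ∀ e, e ∈ F ↔ f e ∉ intSubring := by simp [hF]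
  set W : Finset V := F.image src ∪ F.image tgt with hWdef
  have hsrc : ∀ e ∈ F, src e ∈ W := fun e he => mem_union_left _ (mem_image_of_mem _ he)
  have htgt : ∀ e ∈ F, tgt e ∈ W := fun e he => mem_union_right _ (mem_image_of_mem _ he)
  have hcard : #W ≤ #F := by
    have h1 : ∑ v ∈ W, 2 ≤ ∑ v ∈ W, #{e ∈ F | src e = v ∨ tgt e = v} := by
      refine sum_le_sum fun v hv => ?_
      obtain ⟨e, he, hev⟩ : ∃ e ∈ F, src e = v ∨ tgt e = v := by
        rcases mem_union.1 hv with h | h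
        · obtain ⟨e, he, rfl⟩ := mem_image.1 h
          exact ⟨e, he, .inl rfl⟩
        · obtain ⟨e, he, rfl⟩ := mem_image.1 h
          exact ⟨e, he, .inr rfl⟩
      rw [hF, filter_filter]
      exact two_le_card_fractional_edges_at hne (hf v) ((memF e).1 he) hev
    have h2 : ∑ v ∈ W, #{e ∈ F | src e = v ∨ tgt e = v} ≤ ∑ e ∈ F, 2 := by
      simp only [card_filter]
      rw [sum_comm]
      refine sum_le_sum fun e _ => ?_
      rw [← card_filter]
      refine (card_le_card (t := {src e, tgt e}) fun v hv => ?_).trans card_le_two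
      rcases (mem_filter.1 hv).2 with h | h <;> simp [h]
    simp only [sum_const, smul_eq_mul] at h1 h2
    omega
  have hv₀ : src e₀ ∈ W := hsrc e₀ ((memF e₀).2 he₀)
  let L : (E → ℝ) →ₗ[ℝ] ((W.erase (src e₀) : Finset V) → ℝ) × ((Fᶜ : Finset E) → ℝ) :=
    { toFun := fun d => (fun v => netInflow src tgt d v, fun e => d e)
      map_add' := fun d d' => by ext <;> simp [netInflow_add]
      map_smul' := fun c d => by ext <;> simp [netInflow_smul] }
  have hker : LinearMap.ker L ≠ ⊥ := by
    apply LinearMap.ker_ne_bot_of_finrank_lt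
    have h3 : 0 < #W := card_pos.2 ⟨_, hv₀⟩
    have h4 := card_le_univ F
    simp only [Module.finrank_prod, Module.finrank_fintype_fun_eq_card, Fintype.card_coe,
      card_erase_of_mem hv₀, card_compl]
    omega
  obtain ⟨d, hd, hd0⟩ := (Submodule.ne_bot_iff _).1 hker
  have hL : L d = 0 := hd
  have hint : ∀ e, f e ∈ intSubring → d e = 0 := fun e he => by
    have := congrFun (congrArg Prod.snd hL) ⟨e, by simpa [memF] using he⟩
    exact this
  have hsupp : ∀ e, d e ≠ 0 → e ∈ F := fun e he => (memF e).2 fun h => he (hint e h)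
  have herase : ∀ v ∈ W.erase (src e₀), netInflow src tgt d v = 0 := fun v hv =>
    congrFun (congrArg Prod.fst hL) ⟨v, hv⟩
  refine ⟨d, hd0, hint, fun v => ?_⟩
  by_cases hvW : v ∈ W
  · by_cases hv : v = src e₀
    · have := sum_netInflow_eq_zero (src := src) (tgt := tgt) W
        fun e he => ⟨hsrc e (hsupp e he), htgt e (hsupp e he)⟩
      rw [← add_sum_erase _ _ hv₀, sum_eq_zero herase, add_zero] at this
      rw [hv, this]
    · exact herase v (mem_erase.2 ⟨hv, hvW⟩)
  · refine sum_eq_zero fun e _ => ?_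
    by_cases he : d e = 0
    · simp [he]
    · rw [incidence_eq_zero, zero_mul]
      rintro (rfl | rfl)
      · exact hvW (hsrc e (hsupp e he))
      · exact hvW (htgt e (hsupp e he))

/-- The flows with the same net inflows as `f` whose edge values lie between the floor and the
ceiling of those of `f`. -/
def roundingPolytope (src tgt : E → V) (f : E → ℝ) : Set (E → ℝ) :=
  {g | (∀ v, netInflow src tgt g v = netInflow src tgt f v) ∧
    ∀ e, (⌊f e⌋ : ℝ) ≤ g e ∧ g e ≤ ⌈f e⌉}

lemma convex_roundingPolytope (f : E → ℝ) : Convex ℝ (roundingPolytope src tgt f) := by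
  rintro g ⟨hg, hg'⟩ h ⟨hh, hh'⟩ a b ha hb hab
  refine ⟨fun v => ?_, fun e => ?_⟩
  · rw [netInflow_add, netInflow_smul, netInflow_smul, hg, hh, ← add_mul, hab, one_mul]
  · exact convex_Icc (⌊f e⌋ : ℝ) ⌈f e⌉ (hg' e) (hh' e) ha hb hab

lemma isCompact_roundingPolytope (f : E → ℝ) : IsCompact (roundingPolytope src tgt f) := by
  have : roundingPolytope src tgt f = Set.Icc (fun e => (⌊f e⌋ : ℝ)) (fun e => (⌈f e⌉ : ℝ)) ∩
      ⋂ v, {g | netInflow src tgt g v = netInflow src tgt f v} := by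
    ext g
    simp only [roundingPolytope, Set.mem_ofPred_eq, Set.mem_inter_iff, Set.mem_Icc, Pi.le_def,
      Set.mem_iInter, ← forall_and]
    exact and_comm
  rw [this]
  refine isCompact_Icc.inter_right (isClosed_iInter fun v => isClosed_eq ?_ continuous_const)
  unfold netInflow
  fun_prop

lemma integral_of_mem_extremePoints (hne : ∀ e, src e ≠ tgt e) {f : E → ℝ}
    (hf : ∀ v, netInflow src tgt f v ∈ intSubring) {g : E → ℝ}
    (hg : g ∈ (roundingPolytope src tgt f).extremePoints ℝ) (e : E) : g e ∈ intSubring := by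
  by_contra he
  obtain ⟨⟨hg1, hg2⟩, hext⟩ := mem_extremePoints.1 hg
  obtain ⟨d, hd0, hdint, hdinflow⟩ :=
    exists_circulation_on_fractional hne (fun v => by rw [hg1 v]; exact hf v) he
  have hev : ∀ᶠ ε : ℝ in nhds 0, ∀ e, (⌊f e⌋ : ℝ) ≤ g e + ε * d e ∧ g e + ε * d e ≤ ⌈f e⌉ := by
    refine Filter.eventually_all.2 fun e => ?_
    by_cases h : g e ∈ intSubring
    · simp [hdint e h, hg2 e]
    · have hc : Filter.Tendsto (fun ε : ℝ => g e + ε * d e) (nhds 0) (nhds (g e)) := by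
        have : Continuous fun ε : ℝ => g e + ε * d e := by fun_prop
        simpa using this.tendsto 0
      have h1 : (⌊f e⌋ : ℝ) < g e := (hg2 e).1.lt_of_ne fun h' => h ⟨⌊f e⌋, by simpa using h'⟩
      have h2 : g e < (⌈f e⌉ : ℝ) := (hg2 e).2.lt_of_ne fun h' => h ⟨⌈f e⌉, by simpa using h'.symm⟩
      filter_upwards [hc.eventually_const_lt h1, hc.eventually_lt_const h2] with ε ha hb
      exact ⟨ha.le, hb.le⟩
  obtain ⟨δ, hδ, hball⟩ := Metric.eventually_nhds_iff.1 hev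
  have hmem : ∀ ε : ℝ, |ε| < δ → g + ε • d ∈ roundingPolytope src tgt f := fun ε hε =>
    ⟨fun v => by rw [netInflow_add, netInflow_smul, hdinflow, mul_zero, add_zero, hg1],
      fun e => hball (by simpa using hε) e⟩
  have hδ2 : |δ / 2| < δ := by rw [abs_of_pos (by positivity)]; linarith
  have := hext _ (hmem (δ / 2) hδ2) _ (hmem (-(δ / 2)) (by rwa [abs_neg]))
    ⟨1 / 2, 1 / 2, by norm_num, by norm_num, by norm_num, by module⟩
  have h0 : (δ / 2) • d = 0 := by simpa using this.1
  exact hd0 ((smul_eq_zero.1 h0).resolve_left (by positivity))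

/-- A flow with integral net inflows is a convex combination of integral flows with the same net
inflows, each obtained by rounding every edge value up or down. -/
theorem mem_convexHull_integral_roundings (hne : ∀ e, src e ≠ tgt e) {f : E → ℝ}
    (hf : ∀ v, netInflow src tgt f v ∈ intSubring) :
    f ∈ convexHull ℝ (roundingPolytope src tgt f ∩ {g | ∀ e, g e ∈ intSubring}) := by
  set S := roundingPolytope src tgt f ∩ {g | ∀ e, g e ∈ intSubring} with hS
  have hfin : S.Finite := by
    refine (Set.Finite.pi' fun e =>
      ((Set.finite_Icc ⌊f e⌋ ⌈f e⌉).image (fun n : ℤ => (n : ℝ)))).subset ?_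
    rintro g ⟨hg, hg'⟩ e
    obtain ⟨n, hn⟩ := hg' e
    have := hg.2 e
    rw [← hn, eq_intCast] at this
    exact ⟨n, ⟨by exact_mod_cast this.1, by exact_mod_cast this.2⟩, hn⟩
  have hsub : (roundingPolytope src tgt f).extremePoints ℝ ⊆ S := fun g hg =>
    ⟨extremePoints_subset hg, integral_of_mem_extremePoints hne hf hg⟩
  have hmem : f ∈ roundingPolytope src tgt f :=
    ⟨fun _ => rfl, fun e => ⟨Int.floor_le _, Int.le_ceil _⟩⟩
  rw [← closure_convexHull_extremePoints (isCompact_roundingPolytope f)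
    (convex_roundingPolytope f)] at hmem
  exact closure_minimal (convexHull_mono hsub) (hfin.isClosed_convexHull ℝ) hmem

end Flow

/-- Edges of the seat network with seats indexed by `Fin (m + 1)`: `inl (k, j)` carries the share
of seat `k` given to `j`, and `inr (k, j)` the total share of the seats up to `k` given to `j`. -/
abbrev SeatEdge (m : ℕ) (C : Type) := (Fin (m + 1) × C) ⊕ (Fin (m + 1) × C)

/-- Vertices of the seat network: the seats together with a sink, and for each seat and category a
vertex accumulating the seats of the category. -/
abbrev SeatVertex (m : ℕ) (C : Type) := Option (Fin (m + 1)) ⊕ (Fin (m + 1) × C)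

/-- Sources of the edges of the seat network. -/
def seatSrc {m : ℕ} {C : Type} : SeatEdge m C → SeatVertex m C
  | .inl (k, _) => .inl (some k)
  | .inr (k, j) => .inr (k, j)

/-- Targets of the edges of the seat network. -/
def seatTgt {m : ℕ} {C : Type} : SeatEdge m C → SeatVertex m C
  | .inl (k, j) => .inr (k, j)
  | .inr (k, j) => Fin.lastCases (.inl none) (fun i : Fin m => .inr (i.succ, j)) k

section Seats

variable {m : ℕ} {C : Type}

lemma seatSrc_ne_seatTgt (e : SeatEdge m C) : seatSrc e ≠ seatTgt e := by
  rcases e with ⟨k, j⟩ | ⟨k, j⟩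
  · simp [seatSrc, seatTgt]
  · induction k using Fin.lastCases with
    | last => simp [seatSrc, seatTgt]
    | cast i => simp [seatSrc, seatTgt, Fin.castSucc_lt_succ.ne]

variable [Fintype C]

lemma netInflow_seatNetwork [DecidableEq C] (f : SeatEdge m C → ℝ) (v : SeatVertex m C) :
    netInflow seatSrc seatTgt f v =
      (∑ k, ∑ j, if v = .inr (k, j) then f (.inl (k, j)) else 0) +
      ((∑ k : Fin m, ∑ j, if v = .inr (k.succ, j) then f (.inr (k.castSucc, j)) else 0) +
        ∑ j, if v = .inl none then f (.inr (Fin.last m, j)) else 0) -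
      ((∑ k, ∑ j, if v = .inl (some k) then f (.inl (k, j)) else 0) +
        ∑ k, ∑ j, if v = .inr (k, j) then f (.inr (k, j)) else 0) := by
  have hlast : ∑ k, ∑ j, (if v = seatTgt (.inr (k, j)) then f (.inr (k, j)) else 0) =
      (∑ k : Fin m, ∑ j, if v = .inr (k.succ, j) then f (.inr (k.castSucc, j)) else 0) +
        ∑ j, if v = .inl none then f (.inr (Fin.last m, j)) else 0 := by
    simp [Fin.sum_univ_castSucc, seatTgt]
  rw [← hlast]
  simp [netInflow, incidence, sub_mul, sum_sub_distrib, Fintype.sum_sum_type,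
    Fintype.sum_prod_type, Pi.single_apply, seatSrc, seatTgt, -sum_ite_irrel]
  congr!

lemma netInflow_seat (f : SeatEdge m C → ℝ) (k : Fin (m + 1)) :
    netInflow seatSrc seatTgt f (.inl (some k)) = -∑ j, f (.inl (k, j)) := by
  classical
  simp [netInflow_seatNetwork, sum_ite_irrel]

lemma netInflow_sink (f : SeatEdge m C → ℝ) :
    netInflow seatSrc seatTgt f (.inl none) = ∑ j, f (.inr (Fin.last m, j)) := by
  classical
  simp [netInflow_seatNetwork]

lemma netInflow_zero (f : SeatEdge m C → ℝ) (j : C) :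
    netInflow seatSrc seatTgt f (.inr (0, j)) = f (.inl (0, j)) - f (.inr (0, j)) := by
  classical
  simp [netInflow_seatNetwork, ite_and, sum_ite_irrel, (Fin.succ_ne_zero _).symm]

lemma netInflow_succ (f : SeatEdge m C → ℝ) (k : Fin m) (j : C) :
    netInflow seatSrc seatTgt f (.inr (k.succ, j)) =
      f (.inl (k.succ, j)) + f (.inr (k.castSucc, j)) - f (.inr (k.succ, j)) := by
  classical
  simp [netInflow_seatNetwork, ite_and, sum_ite_irrel]

/-- The flow giving every category its fair share of every seat. -/
def fairFlow (m : ℕ) (α : C → ℝ) : SeatEdge m C → ℝ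
  | .inl (_, j) => α j
  | .inr (k, j) => α j * (((k : ℕ) + 1 : ℕ) : ℝ)

variable {α : C → ℝ}

lemma netInflow_fairFlow_node (k : Fin (m + 1)) (j : C) :
    netInflow seatSrc seatTgt (fairFlow m α) (.inr (k, j)) = 0 := by
  induction k using Fin.cases with
  | zero => simp [netInflow_zero, fairFlow]
  | succ i => rw [netInflow_succ]; simp [fairFlow]; ring

lemma netInflow_fairFlow_seat (hα : ∑ j, α j = 1) (k : Fin (m + 1)) :
    netInflow seatSrc seatTgt (fairFlow m α) (.inl (some k)) = -1 := by
  simp [netInflow_seat, fairFlow, hα]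

lemma netInflow_fairFlow_mem_intSubring (hα : ∑ j, α j = 1) (v : SeatVertex m C) :
    netInflow seatSrc seatTgt (fairFlow m α) v ∈ intSubring := by
  rcases v with (_ | k) | ⟨k, j⟩
  · rw [netInflow_sink]
    simp only [fairFlow, ← sum_mul, hα, one_mul]
    exact natCast_mem _ _
  · rw [netInflow_fairFlow_seat hα]
    exact neg_mem (one_mem _)
  · rw [netInflow_fairFlow_node]
    exact zero_mem _

/-- An integral rounding of the fair flow is a seat-by-seat assignment: `z k j` is the number of
seats of category `j` among the first `k` seats. -/
lemma exists_seat_counts (hα0 : ∀ j, 0 ≤ α j) (hα : ∑ j, α j = 1) {g : SeatEdge m C → ℝ}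
    (hg : g ∈ roundingPolytope seatSrc seatTgt (fairFlow m α))
    (hint : ∀ e, g e ∈ intSubring) :
    ∃ z : ℕ → C → ℕ, (∀ j, z 0 j = 0) ∧ (∀ j, Monotone fun k => z k j) ∧
      (∀ k ≤ m + 1, ∑ j, z k j = k) ∧
      ∀ (k : Fin (m + 1)) (j : C), (z (k + 1) j : ℝ) = g (.inr (k, j)) := by
  have hnat : ∀ e, ∃ n : ℕ, (n : ℝ) = g e := fun e => by
    obtain ⟨n, hn⟩ := hint e
    rw [eq_intCast] at hn
    have hfair : 0 ≤ fairFlow m α e := by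
      rcases e with ⟨k, j⟩ | ⟨k, j⟩
      · exact hα0 j
      · exact mul_nonneg (hα0 j) (Nat.cast_nonneg _)
    have h0 : (0 : ℝ) ≤ ⌊fairFlow m α e⌋ := by exact_mod_cast Int.floor_nonneg.2 hfair
    have hn0 : 0 ≤ n := by
      have := h0.trans (hg.2 e).1
      rw [← hn] at this
      exact_mod_cast this
    lift n to ℕ using hn0
    exact ⟨n, by simpa using hn⟩
  choose n hn using hnat
  have hrow : ∀ k, ∑ j, n (.inl (k, j)) = 1 := fun k => by
    have := hg.1 (.inl (some k))
    rw [netInflow_fairFlow_seat hα, netInflow_seat, neg_inj] at this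
    simp only [← hn] at this
    exact_mod_cast this
  have hzero : ∀ j, n (.inr (0, j)) = n (.inl (0, j)) := fun j => by
    have := hg.1 (.inr (0, j))
    rw [netInflow_fairFlow_node, netInflow_zero, sub_eq_zero, ← hn, ← hn] at this
    exact_mod_cast this.symm
  have hsucc : ∀ (k : Fin m) j,
      n (.inr (k.succ, j)) = n (.inl (k.succ, j)) + n (.inr (k.castSucc, j)) := fun k j => by
    have := hg.1 (.inr (k.succ, j))
    rw [netInflow_fairFlow_node, netInflow_succ, sub_eq_zero, ← hn, ← hn, ← hn] at this
    exact_mod_cast this.symm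
  refine ⟨fun k j => ∑ i : Fin (m + 1) with i.val < k, n (.inl (i, j)), by simp,
    fun j k k' hk => ?_, fun k hk => ?_, fun k j => ?_⟩
  · refine sum_le_sum_of_subset fun i hi => ?_
    simp only [mem_filter, mem_univ, true_and] at hi ⊢
    exact hi.trans_le hk
  · rw [sum_comm]
    simp [hrow, Fin.card_filter_val_lt, hk]
  · rw [← hn]
    congr 1
    change ∑ i : Fin (m + 1) with i.val < k.val + 1, n (.inl (i, j)) = n (.inr (k, j))
    induction k using Fin.induction with
    | zero =>
      have h : univ.filter (fun i : Fin (m + 1) => i.val < (0 : Fin (m + 1)).val + 1) = {0} := by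
        ext i
        rw [mem_filter, mem_singleton, Fin.ext_iff]
        simp only [mem_univ, true_and, Fin.val_zero]
        omega
      rw [hzero, h, sum_singleton]
    | succ k ih =>
      have h : univ.filter (fun i : Fin (m + 1) => i.val < k.succ.val + 1) =
          insert k.succ (univ.filter fun i : Fin (m + 1) => i.val < k.castSucc.val + 1) := by
        ext i
        simp only [mem_filter, mem_univ, true_and, mem_insert, Fin.ext_iff, Fin.val_succ,
          Fin.val_castSucc]
        omega
      rw [hsucc, ← ih, h, sum_insert (by simp)]

/-- For every number of seats up to `m + 1` there is a lottery over seat-by-seat assignments that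
rounds all cumulative fair shares up or down and meets them in expectation. -/
lemma exists_seat_lottery (m : ℕ) (hα0 : ∀ j, 0 ≤ α j) (hα : ∑ j, α j = 1) :
    ∃ (N : ℕ) (p : Fin N → ℝ) (z : Fin N → ℕ → C → ℕ),
      (∀ a, 0 ≤ p a) ∧ (∑ a, p a = 1) ∧ (∀ a j, Monotone fun k => z a k j) ∧
      (∀ a, ∀ k ≤ m + 1, ∑ j, z a k j = k) ∧
      (∀ a, ∀ k ≤ m + 1, ∀ j, (z a k j : ℤ) = ⌊α j * k⌋ ∨ (z a k j : ℤ) = ⌈α j * k⌉) ∧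
      ∀ k ≤ m + 1, ∀ j, ∑ a, p a * z a k j = α j * k := by
  obtain ⟨ι, _, w, g, hw0, hw1, hg, hsum⟩ := mem_convexHull_iff_exists_fintype.1
    (mem_convexHull_integral_roundings (seatSrc_ne_seatTgt (m := m))
      (netInflow_fairFlow_mem_intSubring hα))
  choose z hz0 hzmono hzsum hzg using fun a => exists_seat_counts hα0 hα (hg a).1 (hg a).2
  let φ := (Fintype.equivFin ι).symm
  refine ⟨Fintype.card ι, w ∘ φ, z ∘ φ, fun a => hw0 _, by simpa [hw1] using φ.sum_comp w,
    fun a => hzmono _, fun a => hzsum _, fun a k hk j => ?_, fun k hk j => ?_⟩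
  · rcases k with _ | k
    · simp [hz0]
    · have hround := (hg (φ a)).1.2 (.inr (⟨k, hk⟩, j))
      rw [← hzg (φ a) ⟨k, hk⟩ j] at hround
      obtain ⟨h1, h2⟩ := hround
      simp only [fairFlow] at h1 h2
      have h1' : ⌊α j * ((k + 1 : ℕ) : ℝ)⌋ ≤ (z (φ a) (k + 1) j : ℤ) := by exact_mod_cast h1
      have h2' : (z (φ a) (k + 1) j : ℤ) ≤ ⌈α j * ((k + 1 : ℕ) : ℝ)⌉ := by exact_mod_cast h2
      have h3 := Int.ceil_le_floor_add_one (α j * ((k + 1 : ℕ) : ℝ))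
      simp only [Function.comp_apply]
      omega
  · refine (φ.sum_comp fun a => w a * (z a k j : ℝ)).trans ?_
    rcases k with _ | k
    · simp [hz0]
    · have := congrFun hsum (.inr (⟨k, hk⟩, j))
      simpa [fairFlow, ← hzg] using this

end Seats

/-- For every reservation problem over a finite horizon T there
exists a finitely supported lottery over monotone sequences of reservation tables
that stays within department quota almost surely and is unbiased. -/
theorem lottery_within_department_quota_unbiased
    (D C : Type) [Fintype D] [Fintype C]
    (hD : 2 ≤ Fintype.card D) (hC : 2 ≤ Fintype.card C)
    (α : C → ℝ) (hα0 : ∀ j, 0 < α j) (hα1 : ∀ j, α j < 1)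
    (hαsum : ∑ j, α j = 1)
    (T : ℕ) (q : Fin T → D → ℕ) :
    ∃ (N : ℕ) (p : Fin N → ℝ) (Z : Fin N → Fin T → D → C → ℕ),
      (∀ a, 0 ≤ p a) ∧ (∑ a, p a = 1) ∧
      (∀ a t i, ∑ j, Z a t i j = cumQ q t i) ∧
      (∀ a (t t' : Fin T), t ≤ t' → ∀ i j, Z a t i j ≤ Z a t' i j) ∧
      (∀ a, p a ≠ 0 → ∀ t i j,
        ((Z a t i j : ℕ) : ℤ) = ⌊α j * ((cumQ q t i : ℕ) : ℝ)⌋ ∨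
        ((Z a t i j : ℕ) : ℤ) = ⌈α j * ((cumQ q t i : ℕ) : ℝ)⌉) ∧
      (∀ t i j, ∑ a, p a * ((Z a t i j : ℕ) : ℝ) = α j * ((cumQ q t i : ℕ) : ℝ)) := by
  obtain ⟨N, p, z, hp0, hp1, hmono, hsum, hround, hmean⟩ :=
    exists_seat_lottery (∑ t, ∑ i, cumQ q t i) (fun j => (hα0 j).le) hαsum
  have hle : ∀ t i, cumQ q t i ≤ ∑ t, ∑ i, cumQ q t i + 1 := fun t i =>
    ((single_le_sum (f := fun i => cumQ q t i) (fun _ _ => Nat.zero_le _) (mem_univ i)).trans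
      (single_le_sum (f := fun t => ∑ i, cumQ q t i) (fun _ _ => Nat.zero_le _)
        (mem_univ t))).trans (Nat.le_succ _)
  refine ⟨N, p, fun a t i j => z a (cumQ q t i) j, hp0, hp1, fun a t i => hsum a _ (hle t i),
    fun a t t' htt' i j => hmono a j ?_, fun a _ t i j => hround a _ (hle t i) j,
    fun t i j => hmean _ (hle t i) j⟩
  refine sum_le_sum_of_subset fun s hs => ?_
  simp only [mem_filter, mem_univ, true_and] at hs ⊢
  exact hs.trans htt'
end

section
/- Let m ∈ ℕ, α ∈ (0,1) and ε ∈ (0,1) be such that λ := (1+ε)·α satisfies 1/2 ≤ λ < 1 and λ·m ∈ ℕ, and set μ = α·m. Then the probability that a Binomial(m, α) random variable X satisfies X ≥ (1+ε)·μ is at least (1/√(2m))·exp(−μ·ε²·( 1 + 1/ε + (1−(1+ε)α)/((1−α)·ε) )). Consequently, the exponential rate exp(−b²/x) (up to a multiplicative constant in the exponent, with b = εμ and x = μ) in the definition of approximately staying within university quota cannot be improved: any unbiased lottery solution staying within department quota that treats departments independently has, on the instance where each of m departments has exactly one vacancy and category j has reservation fraction α, university-level allocation to j distributed as Binomial(m,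 α), whose upper tail obeys the above lower bound. -/
open Finset

/-- The factorial in terms of the Stirling sequence. -/
theorem factorial_eq_stirlingSeq_mul {n : ℕ} (hn : n ≠ 0) :
    (n.factorial : ℝ) =
      Stirling.stirlingSeq n * (Real.sqrt (2 * n) * (n / Real.exp 1) ^ n) := by
  have : (0 : ℝ) < n := by positivity
  rw [Stirling.stirlingSeq, div_mul_cancel₀]
  positivity

theorem stirlingSeq_le_of_le {a b : ℕ} (ha : a ≠ 0) (hab : a ≤ b) :
    Stirling.stirlingSeq b ≤ Stirling.stirlingSeq a := by
  obtain ⟨a, rfl⟩ := Nat.exists_eq_succ_of_ne_zero ha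
  obtain ⟨b, rfl⟩ := Nat.exists_eq_succ_of_ne_zero (by lia : b ≠ 0)
  exact Stirling.stirlingSeq'_antitone (by lia)

theorem stirlingSeq_pos {n : ℕ} (hn : n ≠ 0) : 0 < Stirling.stirlingSeq n := by
  obtain ⟨n, rfl⟩ := Nat.exists_eq_succ_of_ne_zero hn
  exact Stirling.stirlingSeq'_pos n

theorem stirlingSeq_two : Stirling.stirlingSeq 2 = Real.exp 1 ^ 2 / 4 := by
  have h : Real.sqrt (2 * (2 : ℕ)) = 2 := by
    rw [Real.sqrt_eq_iff_mul_self_eq] <;> norm_num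
  rw [Stirling.stirlingSeq, h, Nat.factorial_two]
  push_cast
  field_simp
  norm_num

theorem lt_stirlingSeq {n : ℕ} (hn : n ≠ 0) : 1.77 < Stirling.stirlingSeq n := by
  refine lt_of_lt_of_le ?_ (Stirling.sqrt_pi_le_stirlingSeq hn)
  rw [Real.lt_sqrt (by norm_num)]
  linarith [Real.pi_gt_d2, show (1.77 : ℝ) ^ 2 < 3.14 by norm_num]

theorem sqrt_mul_stirlingSeq_one_mul_le {k : ℕ} (hk : 2 ≤ k) :
    Real.sqrt k * (Stirling.stirlingSeq 1 * Stirling.stirlingSeq k) ≤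
      (1 + k) * Stirling.stirlingSeq (1 + k) := by
  have hk2 : (2 : ℝ) ≤ k := by exact_mod_cast hk
  have hs : Real.sqrt k ≤ (1 + k) * (Real.sqrt 2 / 3) := by
    rw [Real.sqrt_le_left (by positivity), mul_pow, div_pow, Real.sq_sqrt (by norm_num)]
    nlinarith
  have he := Real.exp_one_lt_d9
  have he3 : Real.exp 1 ^ 3 ≤ 2.7182818286 ^ 3 := by gcongr
  calc Real.sqrt k * (Stirling.stirlingSeq 1 * Stirling.stirlingSeq k)
      ≤ ((1 + k) * (Real.sqrt 2 / 3)) *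
          (Real.exp 1 / Real.sqrt 2 * (Real.exp 1 ^ 2 / 4)) := by
        rw [Stirling.stirlingSeq_one]
        have hk0 := stirlingSeq_pos (n := k) (by lia)
        gcongr
        rw [← stirlingSeq_two]
        exact stirlingSeq_le_of_le two_ne_zero hk
    _ = (1 + k) * (Real.exp 1 ^ 3 / 12) := by
        field_simp
        norm_num
    _ ≤ (1 + k) * Stirling.stirlingSeq (1 + k) := by
        gcongr
        have := lt_stirlingSeq (n := 1 + k) (by lia)
        norm_num at he3 this ⊢
        linarith

theorem sqrt_mul_stirlingSeq_mul_le {l k : ℕ} (hl : 2 ≤ l) (hk : 2 ≤ k) :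
    Real.sqrt (l * k) * (Stirling.stirlingSeq l * Stirling.stirlingSeq k) ≤
      (l + k) * Stirling.stirlingSeq (l + k) := by
  have hs : Real.sqrt (l * k) ≤ (l + k) / 2 := by
    rw [Real.sqrt_le_left (by positivity)]
    nlinarith [sq_nonneg ((l : ℝ) - k)]
  have he := Real.exp_one_lt_d9
  have he4 : Real.exp 1 ^ 4 ≤ 2.7182818286 ^ 4 := by gcongr
  have hl0 := stirlingSeq_pos (n := l) (by lia)
  have hk0 := stirlingSeq_pos (n := k) (by lia)
  have hl2 := stirlingSeq_le_of_le two_ne_zero hl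
  have hk2 := stirlingSeq_le_of_le two_ne_zero hk
  rw [stirlingSeq_two] at hl2 hk2
  calc Real.sqrt (l * k) * (Stirling.stirlingSeq l * Stirling.stirlingSeq k)
      ≤ ((l + k) / 2) * (Real.exp 1 ^ 2 / 4 * (Real.exp 1 ^ 2 / 4)) := by gcongr
    _ = (l + k) * (Real.exp 1 ^ 4 / 32) := by ring
    _ ≤ (l + k) * Stirling.stirlingSeq (l + k) := by
        gcongr
        have := lt_stirlingSeq (n := l + k) (by lia)
        norm_num at he4 this ⊢
        linarith

theorem sqrt_mul_stirlingSeq_mul_le_of_ne_zero {l k : ℕ} (hl : l ≠ 0) (hk : k ≠ 0) :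
    Real.sqrt (l * k) * (Stirling.stirlingSeq l * Stirling.stirlingSeq k) ≤
      (l + k) * Stirling.stirlingSeq (l + k) := by
  rcases (by lia : l = 1 ∨ 2 ≤ l) with rfl | hl2 <;>
    rcases (by lia : k = 1 ∨ 2 ≤ k) with rfl | hk2
  · have h2 : Real.sqrt 2 * Real.sqrt 2 = 2 := Real.mul_self_sqrt (by norm_num)
    rw [stirlingSeq_two, Stirling.stirlingSeq_one, div_mul_div_comm, h2]
    simp only [Nat.cast_one, mul_one, Real.sqrt_one]
    linarith
  · simpa using sqrt_mul_stirlingSeq_one_mul_le hk2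
  · simpa [add_comm, mul_comm] using sqrt_mul_stirlingSeq_one_mul_le hl2
  · exact sqrt_mul_stirlingSeq_mul_le hl2 hk2

/-- A lower bound for the probability that a binomial variable attains its mean. -/
theorem one_div_sqrt_le_choose_mul_pow {l k : ℕ} (hl : l ≠ 0) (hk : k ≠ 0) :
    1 / Real.sqrt (2 * (l + k)) ≤
      ((l + k).choose l : ℝ) * (l / (l + k)) ^ l * (k / (l + k)) ^ k := by
  have hl0 : (0 : ℝ) < l := by positivity
  have hk0 : (0 : ℝ) < k := by positivity
  have hsl := stirlingSeq_pos hl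
  have hsk := stirlingSeq_pos hk
  have hmain := sqrt_mul_stirlingSeq_mul_le_of_ne_zero hl hk
  have hsq : Real.sqrt (2 * (l + k)) * Real.sqrt (2 * (l + k)) = 2 * (l + k : ℝ) :=
    Real.mul_self_sqrt (by positivity)
  have hsqlk : Real.sqrt (2 * l) * Real.sqrt (2 * k) = 2 * Real.sqrt (l * k) := by
    rw [← Real.sqrt_mul (by positivity), show (2 * l * (2 * k) : ℝ) = 2 ^ 2 * (l * k) by ring,
      Real.sqrt_mul (by positivity), Real.sqrt_sq (by norm_num)]
  have hchoose : ((l + k).choose l : ℝ) * (l / (l + k)) ^ l * (k / (l + k)) ^ k =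
      Stirling.stirlingSeq (l + k) * Real.sqrt (2 * (l + k)) /
        (Stirling.stirlingSeq l * Stirling.stirlingSeq k *
          (Real.sqrt (2 * l) * Real.sqrt (2 * k))) := by
    rw [Nat.cast_add_choose, factorial_eq_stirlingSeq_mul hl, factorial_eq_stirlingSeq_mul hk,
      factorial_eq_stirlingSeq_mul (by lia : l + k ≠ 0)]
    push_cast
    simp only [div_pow, pow_add]
    field_simp
  rw [hchoose, hsqlk, div_le_div_iff₀ (by positivity) (by positivity),
    mul_assoc (Stirling.stirlingSeq (l + k)), hsq]
  linarith

/-- Tightness of the approximate university-quota bounds: with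
λ = (1+ε)·α satisfying 1/2 ≤ λ < 1 and λ·m ∈ ℕ, and μ = α·m, the probability
that a Binomial(m, α) random variable is at least (1+ε)·μ — i.e. the binomial
upper tail ∑_{c = λm}^{m} C(m,c)·α^c·(1−α)^{m−c} — is at least
(1/√(2m))·exp(−μ·ε²·(1 + 1/ε + (1−(1+ε)α)/((1−α)·ε))). Hence the exponential
rate exp(−b²/x) (up to a multiplicative constant in the exponent, with b = εμ,
x = μ) cannot be improved for unbiased lotteries staying within department quota
with independent departments, since with one vacancy per department the
university-level allocation is Binomial(m, α). -/
theorem binomial_tail_tightness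
    (m : ℕ) (α ε : ℝ) (hα0 : 0 < α) (hα1 : α < 1)
    (hε0 : 0 < ε) (hε1 : ε < 1)
    (hhalf : 1 / 2 ≤ (1 + ε) * α) (hlt1 : (1 + ε) * α < 1)
    (l : ℕ) (hl : (l : ℝ) = (1 + ε) * α * m) :
    (1 / Real.sqrt (2 * m)) *
        Real.exp (-(α * m) * ε ^ 2 *
          (1 + 1 / ε + (1 - (1 + ε) * α) / ((1 - α) * ε)))
      ≤ ∑ c ∈ Finset.Icc l m, (m.choose c : ℝ) * α ^ c * (1 - α) ^ (m - c) := by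
  rcases Nat.eq_zero_or_pos m with rfl | hm
  · have hsum : ∀ c ∈ Finset.Icc l 0,
        0 ≤ (Nat.choose 0 c : ℝ) * α ^ c * (1 - α) ^ (0 - c) := fun c _ => by
      have : 0 ≤ 1 - α := by linarith
      positivity
    simpa using Finset.sum_nonneg hsum
  have hm0 : (0 : ℝ) < m := by exact_mod_cast hm
  have hα' : 0 < 1 - α := by linarith
  have hl0 : l ≠ 0 := by
    rintro rfl
    have : 0 < (1 + ε) * α * m := by positivity
    rw [Nat.cast_zero] at hl
    linarith
  have hlm : l < m := by
    have : (l : ℝ) < m := by rw [hl]; nlinarith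
    exact_mod_cast this
  obtain ⟨k, rfl⟩ := Nat.exists_eq_add_of_le hlm.le
  push_cast at hl hm0 ⊢
  have hratio : (l : ℝ) / (l + k) = (1 + ε) * α := by
    rwa [div_eq_iff hm0.ne']
  have hratio' : (k : ℝ) / (l + k) = 1 - (1 + ε) * α := by
    rw [← hratio]
    field_simp
    ring
  have hmean := one_div_sqrt_le_choose_mul_pow hl0 (by lia : k ≠ 0)
  rw [hratio, hratio'] at hmean
  have hexp : Real.exp (-(α * (l + k)) * ε ^ 2 *
      (1 + 1 / ε + (1 - (1 + ε) * α) / ((1 - α) * ε))) ≤ Real.exp (-ε) ^ l := by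
    rw [← Real.exp_nat_mul, Real.exp_le_exp]
    have hsplit : -(α * (l + k)) * ε ^ 2 *
        (1 + 1 / ε + (1 - (1 + ε) * α) / ((1 - α) * ε)) =
        -((1 + ε) * α * (l + k) * ε) -
          α * (l + k) * ε * ((1 - (1 + ε) * α) / (1 - α)) := by
      field_simp
      ring
    have : 0 ≤ α * (l + k) * ε * ((1 - (1 + ε) * α) / (1 - α)) := by
      have : 0 < 1 - (1 + ε) * α := by linarith
      positivity
    rw [hsplit, ← hl]
    linarith
  have hbase : (1 + ε) * α * Real.exp (-ε) ≤ α := by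
    have h1 : (1 + ε) * Real.exp (-ε) ≤ 1 := by
      rw [Real.exp_neg, ← div_eq_mul_inv, div_le_one (Real.exp_pos ε)]
      linarith [Real.add_one_le_exp ε]
    nlinarith
  have hsub : 0 ≤ 1 - (1 + ε) * α := by linarith
  calc _ ≤ (((l + k).choose l : ℝ) * ((1 + ε) * α) ^ l * (1 - (1 + ε) * α) ^ k) *
        Real.exp (-ε) ^ l := by gcongr
    _ = ((l + k).choose l : ℝ) * ((1 + ε) * α * Real.exp (-ε)) ^ l *
        (1 - (1 + ε) * α) ^ k := by rw [mul_pow _ (Real.exp (-ε))]; ring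
    _ ≤ ((l + k).choose l : ℝ) * α ^ l * (1 - α) ^ k := by
        gcongr
        nlinarith
    _ = ((l + k).choose l : ℝ) * α ^ l * (1 - α) ^ (l + k - l) := by
        rw [Nat.add_sub_cancel_left]
    _ ≤ _ := Finset.single_le_sum
        (f := fun c => ((l + k).choose c : ℝ) * α ^ c * (1 - α) ^ (l + k - c))
        (fun c _ => by positivity) (Finset.mem_Icc.mpr ⟨le_rfl, hlm.le⟩)
end
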